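/- For a nonnegative integer ℓ, a nonnegative integer n, and complex numbers q, x with no vanishing denominators: sum over k from 0 to n of (q^{-3n};q^3)_k * (x;q)_k (q^{1-ℓ}/x;q)_k / ((q;q)_k (-q^{1-ℓ};q)_k (q^{1/2};q)_k (-q^{1/2};q)_k (q^{-3n};q)_k) * q^k equals [(x;q)_ℓ (-x;q)_ℓ / ((x^2;q)_ℓ (-1;q)_ℓ)] times the sum over i from 0 to ℓ of (-1)^i q^{ℓ i} * (1 - x^2 q^{2i-1})/(1 - x^2 q^{-1}) * ((q^{-ℓ};q)_i (x^2 q^{-1};q)_i)/((q;q)_i (x^2 q^{ℓ};q)_i) * ((q^{1+i}x; q^3)_n (q^{2-i}/x; q^3)_n)/((q;q^3)_n (q^2;q^3)_n). (Extension of the first q-Gosper identity with an extra integer parameter.) -/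

import Mathlib

/-- q-Pochhammer symbol `(a; q)_k`. -/
noncomputable def qpoch (a q : ℂ) (k : ℕ) : ℂ := ∏ j ∈ Finset.range k, (1 - a * q ^ j)

/-!
The coefficients of the right-hand side are those of a terminating very-well-poised `₆φ₅` series,
whose summation expresses `(x; q)_k (q^{1-ℓ} / x; q)_k (-q; q)_k / (-q^{1-ℓ}; q)_k` as a combination
of the products `(x q^i; q)_k (q^{1-i} / x; q)_k`. Summing over `k` turns each product into a first
q-Gosper sum in `x q^i`, which is evaluated by induction on `n` because
`(1 - y x) (1 - q y / x)` acts on the products `(x; q)_k (q / x; q)_k` by a two-term relation.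

The hypotheses allow `q` to be a root of unity or `x ^ 2` to be a power of `q`, where the `₆φ₅` or
the first q-Gosper sum may have vanishing denominators. Both sides are continuous in `q^{1/2}`, and
the exceptional values of `q^{1/2}` are countable, so the identity extends to these cases.
-/

open Finset Topology

theorem qpoch_zero (a q : ℂ) : qpoch a q 0 = 1 := prod_range_zero _

theorem qpoch_succ (a q : ℂ) (k : ℕ) : qpoch a q (k + 1) = qpoch a q k * (1 - a * q ^ k) :=
  prod_range_succ _ _

theorem qpoch_add (a q : ℂ) (m k : ℕ) :
    qpoch a q (m + k) = qpoch a q m * qpoch (a * q ^ m) q k := by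
  simp only [qpoch, prod_range_add, pow_add, mul_assoc]

theorem qpoch_succ' (a q : ℂ) (k : ℕ) : qpoch a q (k + 1) = (1 - a) * qpoch (a * q) q k := by
  rw [add_comm, qpoch_add]
  simp [qpoch]

theorem one_sub_mul_qpoch_mul (a q : ℂ) (k : ℕ) :
    (1 - a) * qpoch (a * q) q k = qpoch a q k * (1 - a * q ^ k) := by
  rw [← qpoch_succ', qpoch_succ]

theorem qpoch_ne_zero_iff {a q : ℂ} {k : ℕ} : qpoch a q k ≠ 0 ↔ ∀ j < k, a * q ^ j ≠ 1 := by
  simp only [qpoch, prod_ne_zero_iff, mem_range, sub_ne_zero, ne_comm (a := (1 : ℂ))]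

theorem qpoch_ne_zero_of_le {a q : ℂ} {k m : ℕ} (hkm : k ≤ m) (h : qpoch a q m ≠ 0) :
    qpoch a q k ≠ 0 :=
  qpoch_ne_zero_iff.mpr fun j hj => qpoch_ne_zero_iff.mp h j (hj.trans_le hkm)

theorem qpoch_eq_zero {a q : ℂ} {j k : ℕ} (hjk : j < k) (h : a * q ^ j = 1) : qpoch a q k = 0 :=
  prod_eq_zero (mem_range.mpr hjk) (by rw [h, sub_self])

theorem qpoch_mul_qpoch_neg (a q : ℂ) (k : ℕ) :
    qpoch a q k * qpoch (-a) q k = qpoch (a ^ 2) (q ^ 2) k := by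
  rw [qpoch, qpoch, qpoch, ← prod_mul_distrib]
  exact prod_congr rfl fun j _ => by ring

theorem qpoch_two_mul (a q : ℂ) (k : ℕ) :
    qpoch a q (2 * k) = qpoch a (q ^ 2) k * qpoch (a * q) (q ^ 2) k := by
  induction k with
  | zero => simp only [mul_zero, qpoch_zero, mul_one]
  | succ k ih =>
    rw [mul_add_one, qpoch_succ, qpoch_succ, ih, qpoch_succ, qpoch_succ]
    ring

theorem qpoch_reflection {q x : ℂ} (hq : q ≠ 0) (hx : x ≠ 0) (i k : ℕ) :
    qpoch (q / q ^ i / x) q k * (qpoch (x / q ^ k) q i * (q ^ k) ^ i) =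
      qpoch x q i * qpoch (q / x) q k := by
  induction i with
  | zero => simp [qpoch_zero]
  | succ i ih =>
    have shift := one_sub_mul_qpoch_mul (1 / (x * q ^ i)) q k
    have arg_succ : q / q ^ (i + 1) / x = 1 / (x * q ^ i) := by field
    have arg_shift : 1 / (x * q ^ i) * q = q / q ^ i / x := by field
    have last_factor : (1 - x / q ^ k * q ^ i) * q ^ k =
        -(x * q ^ i) * (1 - 1 / (x * q ^ i) * q ^ k) := by
      field
    have first_factor : 1 - x * q ^ i = -(x * q ^ i) * (1 - 1 / (x * q ^ i)) := by field
    rw [arg_shift] at shift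
    calc _ = qpoch (1 / (x * q ^ i)) q k * (qpoch (x / q ^ k) q i * (q ^ k) ^ i) *
          ((1 - x / q ^ k * q ^ i) * q ^ k) := by rw [arg_succ, qpoch_succ]; ring
      _ = (1 - x * q ^ i) *
          (qpoch (q / q ^ i / x) q k * (qpoch (x / q ^ k) q i * (q ^ k) ^ i)) := by
        rw [last_factor, first_factor]
        linear_combination x * q ^ i * qpoch (x / q ^ k) q i * (q ^ k) ^ i * shift
      _ = _ := by rw [ih, qpoch_succ]; ring

/-- The part of the `i`-th term of the very-well-poised `₆φ₅(a; b, c, q^{-ℓ}; q)` that does not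
involve `ℓ`; the two square-root parameters are absorbed into `(1 - a q^{2i}) / (1 - a)`. -/
noncomputable def wellPoisedTerm (a b c q : ℂ) (i : ℕ) : ℂ :=
  (1 - a * q ^ (2 * i)) / (1 - a) * (qpoch a q i * qpoch b q i * qpoch c q i) /
    (qpoch q q i * qpoch (a * q / b) q i * qpoch (a * q / c) q i) * (a * q / (b * c)) ^ i

/-- The part `q^{ℓ i} (q^{-ℓ}; q)_i / (a q^{ℓ+1}; q)_i` of the `i`-th term of
`₆φ₅(a; b, c, q^{-ℓ}; q)` that makes the series terminate. -/
noncomputable def terminatingFactor (a q : ℂ) (ℓ i : ℕ) : ℂ :=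
  q ^ (ℓ * i) * qpoch (q ^ ℓ)⁻¹ q i / qpoch (a * q ^ (ℓ + 1)) q i

theorem wellPoisedTerm_succ {a b c q : ℂ} {i : ℕ} (hb : b ≠ 0) (hc : c ≠ 0)
    (hq : q ≠ 0) (hqi : qpoch q q (i + 1) ≠ 0) (ha₀ : 1 - a ≠ 0) (ha₂ : 1 - a * q ^ 2 ≠ 0)
    (hab : qpoch (a * q / b) q (i + 1) ≠ 0) (hac : qpoch (a * q / c) q (i + 1) ≠ 0) :
    wellPoisedTerm a b c q (i + 1) * ((1 - q ^ (i + 1)) * (1 - a * q ^ (i + 1))) =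
      (1 - a * q) * (1 - a * q ^ 2) * (1 - b) * (1 - c) /
        ((1 - a * q / b) * (1 - a * q / c)) * (a * q / (b * c)) *
        wellPoisedTerm (a * q ^ 2) (b * q) (c * q) q i := by
  have hab' : a * q ^ 2 * q / (b * q) = a * q / b * q := by field_simp
  have hac' : a * q ^ 2 * q / (c * q) = a * q / c * q := by field_simp
  have hz : a * q ^ 2 * q / (b * q * (c * q)) = a * q / (b * c) := by field_simp
  have shift : qpoch a q (i + 1) * (1 - a * q ^ (i + 1)) =
      (1 - a) * (1 - a * q) * qpoch (a * q ^ 2) q i := by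
    rw [← qpoch_succ, qpoch_succ', qpoch_succ']
    ring_nf
  rw [qpoch_succ] at hqi
  rw [qpoch_succ'] at hab hac
  simp only [mul_ne_zero_iff] at hqi hab hac
  rw [← pow_succ'] at hqi
  obtain ⟨hq₀, hq₁⟩ := hqi
  obtain ⟨hab₀, hab₁⟩ := hab
  obtain ⟨hac₀, hac₁⟩ := hac
  calc _ = qpoch a q (i + 1) * (1 - a * q ^ (i + 1)) / (1 - a) *
        ((1 - a * q ^ 2 * q ^ (2 * i)) * ((1 - b) * qpoch (b * q) q i) *
          ((1 - c) * qpoch (c * q) q i) / (qpoch q q i *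
          ((1 - a * q / b) * qpoch (a * q / b * q) q i) *
          ((1 - a * q / c) * qpoch (a * q / c * q) q i)) * (a * q / (b * c)) ^ (i + 1)) := by
        rw [wellPoisedTerm, qpoch_succ q, qpoch_succ' b, qpoch_succ' c, qpoch_succ' (a * q / b),
          qpoch_succ' (a * q / c), ← pow_succ' q i, mul_add_one, pow_add, mul_comm (q ^ _),
          ← mul_assoc a]
        generalize a * q / b = u, a * q / c = v at *
        field
    _ = _ := by
        rw [shift, wellPoisedTerm, hab', hac', hz, pow_succ (a * q / (b * c))]
        generalize a * q / b = u, a * q / c = v, (a * q / (b * c)) ^ i = w at *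
        generalize qpoch (u * q) q i = U, qpoch (v * q) q i = V at *
        field

theorem terminatingFactor_succ_succ {a q : ℂ} {ℓ i : ℕ} (hq : q ≠ 0)
    (ha₁ : 1 - a * q ^ (ℓ + 1) ≠ 0) (ha₂ : 1 - a * q ^ (ℓ + 2) ≠ 0) :
    terminatingFactor a q (ℓ + 1) (i + 1) =
      q ^ ℓ / ((1 - a * q ^ (ℓ + 1)) * (1 - a * q ^ (ℓ + 2))) *
        terminatingFactor (a * q ^ 2) q ℓ i *
          (q ^ (i + 1) * (1 - (q ^ (ℓ + 1))⁻¹) * (1 - a * q ^ (ℓ + 1))) := by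
  have a_shift : a * q ^ (ℓ + 2) * q = a * q ^ 2 * q ^ (ℓ + 1) := by ring
  have inv_shift : (q ^ (ℓ + 1))⁻¹ * q = (q ^ ℓ)⁻¹ := by field
  rw [terminatingFactor, terminatingFactor, qpoch_succ' (q ^ (ℓ + 1))⁻¹, inv_shift, qpoch_succ',
    a_shift, add_one_mul, mul_add_one, pow_add, pow_add]
  generalize qpoch (a * q ^ 2 * q ^ (ℓ + 1)) q i = D, 1 - a * q ^ (ℓ + 1) = u,
    1 - a * q ^ (ℓ + 2) = v at *
  field

theorem terminatingFactor_succ_right {a q : ℂ} {ℓ i : ℕ} (hq : q ≠ 0)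
    (ha : qpoch (a * q ^ (ℓ + 1)) q (i + 2) ≠ 0) :
    terminatingFactor a q ℓ (i + 1) =
      q ^ ℓ / ((1 - a * q ^ (ℓ + 1)) * (1 - a * q ^ (ℓ + 2))) *
        terminatingFactor (a * q ^ 2) q ℓ i *
          ((1 - (q ^ ℓ)⁻¹ * q ^ i) * (1 - a * q ^ (ℓ + 2) * q ^ i)) := by
  have a_shift : a * q ^ (ℓ + 1) * q = a * q ^ (ℓ + 2) := by ring
  have a_shift' : a * q ^ (ℓ + 2) * q = a * q ^ 2 * q ^ (ℓ + 1) := by ring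
  have shift := one_sub_mul_qpoch_mul (a * q ^ (ℓ + 2)) q i
  rw [a_shift'] at shift
  rw [qpoch_succ', a_shift, qpoch_succ, ← shift] at ha
  obtain ⟨h₁, h₂, h₃⟩ : 1 - a * q ^ (ℓ + 1) ≠ 0 ∧ 1 - a * q ^ (ℓ + 2) ≠ 0 ∧
      qpoch (a * q ^ 2 * q ^ (ℓ + 1)) q i ≠ 0 := by
    simpa only [mul_ne_zero_iff] using ha
  have h₄ : qpoch (a * q ^ (ℓ + 2)) q i ≠ 0 :=
    left_ne_zero_of_mul (shift ▸ mul_ne_zero h₂ h₃)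
  rw [terminatingFactor, terminatingFactor, qpoch_succ (q ^ ℓ)⁻¹, qpoch_succ', a_shift,
    mul_add_one, pow_add]
  generalize qpoch (a * q ^ 2 * q ^ (ℓ + 1)) q i = D, qpoch (q ^ ℓ)⁻¹ q i = S,
    1 - a * q ^ (ℓ + 1) = u, 1 - a * q ^ (ℓ + 2) = v, 1 - (q ^ ℓ)⁻¹ * q ^ i = t,
    1 - a * q ^ (ℓ + 2) * q ^ i = r, qpoch (a * q ^ (ℓ + 2)) q i = E at *
  field_simp
  linear_combination S * t * shift

theorem terminatingFactor_succ_sub {a q : ℂ} {ℓ i : ℕ} (hq : q ≠ 0)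
    (ha : qpoch (a * q ^ (ℓ + 1)) q (i + 2) ≠ 0) :
    terminatingFactor a q (ℓ + 1) (i + 1) - terminatingFactor a q ℓ (i + 1) =
      -(q ^ ℓ / ((1 - a * q ^ (ℓ + 1)) * (1 - a * q ^ (ℓ + 2)))) *
        ((1 - q ^ (i + 1)) * (1 - a * q ^ (i + 1))) * terminatingFactor (a * q ^ 2) q ℓ i := by
  have ha₁ : 1 - a * q ^ (ℓ + 1) ≠ 0 := left_ne_zero_of_mul (qpoch_succ' _ q _ ▸ ha)
  have ha₂ : 1 - a * q ^ (ℓ + 2) ≠ 0 := by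
    rw [qpoch_succ', mul_assoc, ← pow_succ] at ha
    exact left_ne_zero_of_mul (qpoch_succ' _ q _ ▸ right_ne_zero_of_mul ha)
  have factors : q ^ (i + 1) * (1 - (q ^ (ℓ + 1))⁻¹) * (1 - a * q ^ (ℓ + 1)) -
      (1 - (q ^ ℓ)⁻¹ * q ^ i) * (1 - a * q ^ (ℓ + 2) * q ^ i) =
        -((1 - q ^ (i + 1)) * (1 - a * q ^ (i + 1))) := by
    field
  rw [terminatingFactor_succ_succ hq ha₁ ha₂, terminatingFactor_succ_right hq ha, ← mul_sub,
    factors]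
  ring

theorem wellPoisedTerm_zero {a : ℂ} (b c q : ℂ) (ha : 1 - a ≠ 0) :
    wellPoisedTerm a b c q 0 = 1 := by
  simp [wellPoisedTerm, qpoch_zero, ha]

theorem terminatingFactor_zero (a q : ℂ) (ℓ : ℕ) : terminatingFactor a q ℓ 0 = 1 := by
  simp [terminatingFactor, qpoch_zero]

theorem terminatingFactor_eq_zero {q : ℂ} (a : ℂ) {ℓ i : ℕ} (hq : q ≠ 0) (h : ℓ < i) :
    terminatingFactor a q ℓ i = 0 := by
  rw [terminatingFactor, qpoch_eq_zero h (inv_mul_cancel₀ (pow_ne_zero ℓ hq)), mul_zero, zero_div]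

/-- The terminating very-well-poised series `₆φ₅(a; b, c, q^{-ℓ}; q)`. -/
noncomputable def wellPoisedSum (a b c q : ℂ) (ℓ : ℕ) : ℂ :=
  ∑ i ∈ range (ℓ + 1), wellPoisedTerm a b c q i * terminatingFactor a q ℓ i

/-- The value of `₆φ₅(a; b, c, q^{-ℓ}; q)` as a quotient of q-Pochhammer symbols. -/
noncomputable def wellPoisedProduct (a b c q : ℂ) (ℓ : ℕ) : ℂ :=
  qpoch (a * q) q ℓ * qpoch (a * q / (b * c)) q ℓ /
    (qpoch (a * q / b) q ℓ * qpoch (a * q / c) q ℓ)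

/-- The coefficient of `₆φ₅(a q², b q, c q, q^{-ℓ})` in the three-term recurrence relating it to
`₆φ₅(a, b, c, q^{-ℓ})` and `₆φ₅(a, b, c, q^{-ℓ-1})`. -/
noncomputable def wellPoisedRatio (a b c q : ℂ) (ℓ : ℕ) : ℂ :=
  q ^ ℓ / ((1 - a * q ^ (ℓ + 1)) * (1 - a * q ^ (ℓ + 2))) *
    ((1 - a * q) * (1 - a * q ^ 2) * (1 - b) * (1 - c) /
      ((1 - a * q / b) * (1 - a * q / c)) * (a * q / (b * c)))

theorem wellPoisedSum_succ {a b c q : ℂ} {ℓ : ℕ} (hb : b ≠ 0) (hc : c ≠ 0)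
    (hq : q ≠ 0) (hqℓ : qpoch q q (ℓ + 1) ≠ 0) (ha : qpoch a q (2 * ℓ + 3) ≠ 0)
    (hab : qpoch (a * q / b) q (ℓ + 1) ≠ 0) (hac : qpoch (a * q / c) q (ℓ + 1) ≠ 0) :
    wellPoisedSum a b c q (ℓ + 1) = wellPoisedSum a b c q ℓ -
      wellPoisedRatio a b c q ℓ * wellPoisedSum (a * q ^ 2) (b * q) (c * q) q ℓ := by
  have term_succ : ∀ i ∈ range (ℓ + 1),
      wellPoisedTerm a b c q (i + 1) * terminatingFactor a q (ℓ + 1) (i + 1) =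
        wellPoisedTerm a b c q (i + 1) * terminatingFactor a q ℓ (i + 1) -
          wellPoisedRatio a b c q ℓ * (wellPoisedTerm (a * q ^ 2) (b * q) (c * q) q i *
            terminatingFactor (a * q ^ 2) q ℓ i) := by
    intro i hi
    have hiℓ : i ≤ ℓ := mem_range_succ_iff.mp hi
    have ha₀ : 1 - a ≠ 0 := left_ne_zero_of_mul (qpoch_succ' a q _ ▸ ha)
    have ha₂ : 1 - a * q ^ 2 ≠ 0 := sub_ne_zero.mpr (qpoch_ne_zero_iff.mp ha 2 (by lia)).symm
    have ha' : qpoch (a * q ^ (ℓ + 1)) q (i + 2) ≠ 0 := by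
      rw [show 2 * ℓ + 3 = (ℓ + 1) + (ℓ + 2) by ring, qpoch_add] at ha
      exact qpoch_ne_zero_of_le (by lia) (right_ne_zero_of_mul ha)
    have factor_diff := terminatingFactor_succ_sub hq ha'
    have shift := wellPoisedTerm_succ (i := i) hb hc hq (qpoch_ne_zero_of_le (by lia) hqℓ) ha₀ ha₂
      (qpoch_ne_zero_of_le (by lia) hab)
      (qpoch_ne_zero_of_le (by lia) hac)
    rw [wellPoisedRatio]
    generalize q ^ ℓ / ((1 - a * q ^ (ℓ + 1)) * (1 - a * q ^ (ℓ + 2))) = K at *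
    linear_combination wellPoisedTerm a b c q (i + 1) * factor_diff -
      K * terminatingFactor (a * q ^ 2) q ℓ i * shift
  have extend : wellPoisedSum a b c q ℓ =
      ∑ i ∈ range (ℓ + 2), wellPoisedTerm a b c q i * terminatingFactor a q ℓ i := by
    rw [sum_range_succ, terminatingFactor_eq_zero a hq ℓ.lt_succ_self, mul_zero, add_zero,
      wellPoisedSum]
  rw [extend, wellPoisedSum, wellPoisedSum, sum_range_succ', sum_range_succ' _ (ℓ + 1),
    terminatingFactor_zero, terminatingFactor_zero, sum_congr rfl term_succ, sum_sub_distrib,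
    mul_sum]
  ring

theorem wellPoisedRatio_mul_wellPoisedProduct {a b c q : ℂ} {ℓ : ℕ} (hb : b ≠ 0) (hc : c ≠ 0)
    (hq : q ≠ 0) (ha₁ : 1 - a * q ^ (ℓ + 1) ≠ 0) (ha₂ : 1 - a * q ^ (ℓ + 2) ≠ 0) :
    wellPoisedRatio a b c q ℓ * wellPoisedProduct (a * q ^ 2) (b * q) (c * q) q ℓ =
      a * q ^ (ℓ + 1) / (b * c) * ((1 - b) * (1 - c)) *
        (qpoch (a * q) q ℓ * qpoch (a * q / (b * c)) q ℓ /
          (qpoch (a * q / b) q (ℓ + 1) * qpoch (a * q / c) q (ℓ + 1))) := by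
  have hab : a * q ^ 2 * q / (b * q) = a * q / b * q := by field
  have hac : a * q ^ 2 * q / (c * q) = a * q / c * q := by field
  have hz : a * q ^ 2 * q / (b * q * (c * q)) = a * q / (b * c) := by field
  have shift_a : (1 - a * q) * (1 - a * q ^ 2) * qpoch (a * q ^ 2 * q) q ℓ /
      ((1 - a * q ^ (ℓ + 1)) * (1 - a * q ^ (ℓ + 2))) = qpoch (a * q) q ℓ := by
    rw [div_eq_iff (mul_ne_zero ha₁ ha₂)]
    have split := qpoch_add (a * q) q 2 ℓ
    rw [add_comm 2, qpoch_succ, qpoch_succ, qpoch_succ', qpoch_succ', qpoch_zero] at split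
    ring_nf at split ⊢
    linear_combination -split
  have shift_b := one_sub_mul_qpoch_mul (a * q / b) q ℓ
  have shift_c := one_sub_mul_qpoch_mul (a * q / c) q ℓ
  rw [wellPoisedRatio, wellPoisedProduct, hab, hac, hz, qpoch_succ (a * q / b),
    qpoch_succ (a * q / c), ← shift_b, ← shift_c, ← shift_a]
  generalize 1 - a * q / b = r, 1 - a * q / c = s, 1 - a * q ^ (ℓ + 1) = u,
    1 - a * q ^ (ℓ + 2) = v
  ring

theorem wellPoisedProduct_succ {a b c q : ℂ} {ℓ : ℕ} (hb : b ≠ 0) (hc : c ≠ 0) (hq : q ≠ 0)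
    (ha₁ : 1 - a * q ^ (ℓ + 1) ≠ 0) (ha₂ : 1 - a * q ^ (ℓ + 2) ≠ 0)
    (hab : qpoch (a * q / b) q (ℓ + 1) ≠ 0) (hac : qpoch (a * q / c) q (ℓ + 1) ≠ 0) :
    wellPoisedProduct a b c q (ℓ + 1) = wellPoisedProduct a b c q ℓ -
      wellPoisedRatio a b c q ℓ * wellPoisedProduct (a * q ^ 2) (b * q) (c * q) q ℓ := by
  have top (d : ℂ) : a * q / d * q ^ ℓ = a * q ^ (ℓ + 1) / d := by ring
  have telescope : (1 - a * q ^ (ℓ + 1) / b) * (1 - a * q ^ (ℓ + 1) / c) -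
      a * q ^ (ℓ + 1) / (b * c) * ((1 - b) * (1 - c)) =
      (1 - a * q ^ (ℓ + 1)) * (1 - a * q ^ (ℓ + 1) / (b * c)) := by field
  rw [wellPoisedRatio_mul_wellPoisedProduct hb hc hq ha₁ ha₂, wellPoisedProduct, wellPoisedProduct]
  rw [qpoch_succ, top, mul_ne_zero_iff] at hab hac
  rw [qpoch_succ (a * q / b), qpoch_succ (a * q / c), qpoch_succ (a * q), qpoch_succ, top b, top c,
    top (b * c), mul_assoc a q, ← pow_succ' q ℓ]
  generalize 1 - a * q ^ (ℓ + 1) / b = r, 1 - a * q ^ (ℓ + 1) / c = s at *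
  obtain ⟨hb₀, hr⟩ := hab
  obtain ⟨hc₀, hs⟩ := hac
  have common_denom : qpoch (a * q) q ℓ * qpoch (a * q / (b * c)) q ℓ /
      (qpoch (a * q / b) q ℓ * qpoch (a * q / c) q ℓ) =
      qpoch (a * q) q ℓ * qpoch (a * q / (b * c)) q ℓ /
        (qpoch (a * q / b) q ℓ * r * (qpoch (a * q / c) q ℓ * s)) * (r * s) := by
    generalize qpoch (a * q / b) q ℓ = B, qpoch (a * q / c) q ℓ = C at *
    field
  rw [common_denom, mul_mul_mul_comm, ← telescope]
  ring

theorem wellPoisedSum_eq_wellPoisedProduct {a b c q : ℂ} {ℓ : ℕ} (hb : b ≠ 0) (hc : c ≠ 0)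
    (hq : q ≠ 0) (hqℓ : qpoch q q ℓ ≠ 0) (ha : qpoch a q (2 * ℓ + 1) ≠ 0)
    (hab : qpoch (a * q / b) q ℓ ≠ 0) (hac : qpoch (a * q / c) q ℓ ≠ 0) :
    wellPoisedSum a b c q ℓ = wellPoisedProduct a b c q ℓ := by
  induction ℓ generalizing a b c with
  | zero =>
    have ha₀ : 1 - a ≠ 0 := by simpa [qpoch] using ha
    simp [wellPoisedSum, wellPoisedProduct, wellPoisedTerm_zero b c q ha₀, terminatingFactor_zero,
      qpoch_zero]
  | succ ℓ ih =>
    have ha_top (j : ℕ) (hj : j < 2 * ℓ + 3) : 1 - a * q ^ j ≠ 0 :=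
      sub_ne_zero.mpr (qpoch_ne_zero_iff.mp ha j hj).symm
    have ha' : qpoch (a * q ^ 2) q (2 * ℓ + 1) ≠ 0 := by
      rw [show 2 * (ℓ + 1) + 1 = 2 + (2 * ℓ + 1) by ring, qpoch_add] at ha
      exact right_ne_zero_of_mul ha
    have shift {d : ℂ} (hd : d ≠ 0) (h : qpoch (a * q / d) q (ℓ + 1) ≠ 0) :
        qpoch (a * q ^ 2 * q / (d * q)) q ℓ ≠ 0 := by
      rw [show a * q ^ 2 * q / (d * q) = a * q / d * q by field]
      exact right_ne_zero_of_mul (qpoch_succ' (a * q / d) q ℓ ▸ h)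
    rw [wellPoisedSum_succ hb hc hq hqℓ ha hab hac,
      wellPoisedProduct_succ hb hc hq (ha_top _ (by lia)) (ha_top _ (by lia)) hab hac,
      ih hb hc (qpoch_ne_zero_of_le ℓ.le_succ hqℓ) (qpoch_ne_zero_of_le (by lia) ha)
        (qpoch_ne_zero_of_le ℓ.le_succ hab) (qpoch_ne_zero_of_le ℓ.le_succ hac),
      ih (mul_ne_zero hb hq) (mul_ne_zero hc hq) (qpoch_ne_zero_of_le ℓ.le_succ hqℓ) ha'
        (shift hb hab) (shift hc hac)]

theorem qpoch_mul_qpoch_shift {q x : ℂ} (hq : q ≠ 0) (hx : x ≠ 0) (i k : ℕ) :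
    qpoch (x * q ^ i) q k * qpoch (q / q ^ i / x) q k * (qpoch (x / q ^ k) q i * (q ^ k) ^ i) =
      qpoch x q k * qpoch (q / x) q k * qpoch (x * q ^ k) q i := by
  have swap : qpoch x q i * qpoch (x * q ^ i) q k = qpoch x q k * qpoch (x * q ^ k) q i := by
    rw [← qpoch_add, ← qpoch_add, add_comm]
  rw [mul_assoc, qpoch_reflection hq hx]
  linear_combination qpoch (q / x) q k * swap

theorem qpoch_ne_zero_of_sq {q x : ℂ} {ℓ : ℕ} (h : qpoch (x ^ 2) q (2 * ℓ) ≠ 0) :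
    qpoch x q ℓ ≠ 0 ∧ qpoch (-x) q ℓ ≠ 0 := by
  rw [qpoch_two_mul, ← qpoch_mul_qpoch_neg] at h
  exact mul_ne_zero_iff.mp (left_ne_zero_of_mul h)

/-- The coefficient of `(x q^i; q)_k (q^{1-i} / x; q)_k` in the expansion of
`(x; q)_k (q^{1-ℓ} / x; q)_k`, up to a factor that does not depend on `i`. -/
noncomputable def gosperExpansionCoeff (q x : ℂ) (ℓ i : ℕ) : ℂ :=
  (-1) ^ i * q ^ (ℓ * i) * ((1 - x ^ 2 * q ^ (2 * (i : ℤ) - 1)) / (1 - x ^ 2 / q)) *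
    (qpoch (q ^ (-(ℓ : ℤ))) q i * qpoch (x ^ 2 / q) q i) /
    (qpoch q q i * qpoch (x ^ 2 * q ^ ℓ) q i)

theorem gosperExpansionCoeff_mul {q x : ℂ} {ℓ i k : ℕ} (hq : q ≠ 0) (hx : x ≠ 0)
    (hxi : qpoch (-x) q i ≠ 0) (hxk : qpoch (x / q ^ k) q i ≠ 0) :
    gosperExpansionCoeff q x ℓ i * (qpoch (x * q ^ i) q k * qpoch (q / q ^ i / x) q k) =
      qpoch x q k * qpoch (q / x) q k *
        (wellPoisedTerm (x ^ 2 / q) (x * q ^ k) (-x) q i *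
          terminatingFactor (x ^ 2 / q) q ℓ i) := by
  have shift := qpoch_mul_qpoch_shift hq hx i k
  have hqk : (q ^ k) ^ i ≠ 0 := pow_ne_zero i (pow_ne_zero k hq)
  rw [← eq_div_iff (mul_ne_zero hxk hqk)] at shift
  have hz : x ^ 2 / q * q / (x * q ^ k * -x) = -1 / q ^ k := by field
  have hb : x ^ 2 / q * q / (x * q ^ k) = x / q ^ k := by field
  have hc : x ^ 2 / q * q / -x = -x := by field
  have ha : x ^ 2 / q * q ^ (ℓ + 1) = x ^ 2 * q ^ ℓ := by field
  have hi : x ^ 2 * q ^ (2 * (i : ℤ) - 1) = x ^ 2 / q * q ^ (2 * i) := by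
    rw [zpow_sub_one₀ hq, ← zpow_natCast q (2 * i)]
    push_cast
    ring
  rw [shift, gosperExpansionCoeff, wellPoisedTerm, terminatingFactor, hz, hb, hc, ha, hi, div_pow,
    zpow_neg, zpow_natCast]
  generalize qpoch (-x) q i = C, (q ^ k) ^ i = Q, qpoch (x / q ^ k) q i = B,
    (1 - x ^ 2 / q * q ^ (2 * i)) / (1 - x ^ 2 / q) = r, qpoch q q i = D,
    qpoch (x ^ 2 * q ^ ℓ) q i = E at *
  field

theorem sum_gosperExpansionCoeff_mul {q x : ℂ} {ℓ k : ℕ} (hq : q ≠ 0) (hx : x ≠ 0)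
    (hqℓ : qpoch q q ℓ ≠ 0) (hxℓ : qpoch (x ^ 2 / q) q (2 * ℓ + 1) ≠ 0)
    (hxk : qpoch (x / q ^ k) q ℓ ≠ 0) (hqk : qpoch (-(q ^ (1 - ℓ : ℤ))) q k ≠ 0) :
    ∑ i ∈ range (ℓ + 1),
        gosperExpansionCoeff q x ℓ i * (qpoch (x * q ^ i) q k * qpoch (q / q ^ i / x) q k) =
      qpoch (x ^ 2) q ℓ * qpoch (-1) q ℓ / (qpoch x q ℓ * qpoch (-x) q ℓ) *
        (qpoch x q k * qpoch (q ^ (1 - ℓ : ℤ) / x) q k * qpoch (-q) q k /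
          qpoch (-(q ^ (1 - ℓ : ℤ))) q k) := by
  obtain ⟨hx₁, hx₂⟩ : qpoch x q ℓ ≠ 0 ∧ qpoch (-x) q ℓ ≠ 0 := by
    rw [qpoch_succ', div_mul_cancel₀ _ hq] at hxℓ
    exact qpoch_ne_zero_of_sq (right_ne_zero_of_mul hxℓ)
  have hb : x ^ 2 / q * q / (x * q ^ k) = x / q ^ k := by field
  have hc : x ^ 2 / q * q / -x = -x := by field
  have hz : x ^ 2 / q * q / (x * q ^ k * -x) = -1 / q ^ k := by field
  have six_phi_five := wellPoisedSum_eq_wellPoisedProduct (mul_ne_zero hx (pow_ne_zero k hq))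
    (neg_ne_zero.mpr hx) hq hqℓ hxℓ (hb.symm ▸ hxk) (by rwa [hc])
  have reflect_x := qpoch_reflection hq hx ℓ k
  have reflect_neg_one := qpoch_reflection hq (neg_ne_zero.mpr one_ne_zero) ℓ k
  simp only [div_neg, div_one] at reflect_neg_one
  rw [wellPoisedProduct, hb, hc, hz, div_mul_cancel₀ _ hq, wellPoisedSum] at six_phi_five
  rw [zpow_one_sub_natCast₀ hq] at *
  calc _ = qpoch x q k * qpoch (q / x) q k * ∑ i ∈ range (ℓ + 1),
        wellPoisedTerm (x ^ 2 / q) (x * q ^ k) (-x) q i *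
          terminatingFactor (x ^ 2 / q) q ℓ i := by
        rw [mul_sum]
        refine sum_congr rfl fun i hi => ?_
        have hiℓ : i ≤ ℓ := mem_range_succ_iff.mp hi
        exact gosperExpansionCoeff_mul hq hx (qpoch_ne_zero_of_le hiℓ hx₂)
          (qpoch_ne_zero_of_le hiℓ hxk)
    _ = _ := by
        rw [six_phi_five]
        generalize qpoch (q / q ^ ℓ / x) q k = X, qpoch (-(q / q ^ ℓ)) q k = M,
          qpoch (x / q ^ k) q ℓ = B, qpoch (-1 / q ^ k) q ℓ = N, qpoch x q ℓ = R,
          qpoch (-x) q ℓ = R', qpoch (-1) q ℓ = S, qpoch (-q) q k = T, qpoch (q / x) q k = U at *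
        field_simp
        linear_combination qpoch x q k * qpoch (x ^ 2) q ℓ *
          (X * B * reflect_neg_one - N * M * reflect_x)

theorem qpoch_inv_pow_ne_zero {q : ℂ} {k m : ℕ} (hq : q ≠ 0) (hkm : k ≤ m) (h : qpoch q q m ≠ 0) :
    qpoch (q ^ m)⁻¹ q k ≠ 0 := by
  refine qpoch_ne_zero_iff.mpr fun j hj hj' => ?_
  have hm : q ^ m = q ^ j * q ^ (m - j) := by rw [← pow_add, Nat.add_sub_cancel' (by lia)]
  rw [hm] at hj'
  refine qpoch_ne_zero_iff.mp h (m - j - 1) (by lia) ?_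
  rw [← pow_succ', Nat.sub_add_cancel (by lia)]
  field_simp at hj'
  exact hj'.symm

/-- The coefficient of `(x; q)_k (q / x; q)_k` in the first q-Gosper sum, with `N` standing for
`q^{-3n}`. The four symbols `(±q; q)_k (±q^{1/2}; q)_k` are merged into `(q; q)_{2k}`. -/
noncomputable def gosperCoeff (q N : ℂ) (k : ℕ) : ℂ :=
  qpoch N (q ^ 3) k / (qpoch N q k * qpoch q q (2 * k)) * q ^ k

/-- The left-hand side of the first q-Gosper identity. -/
noncomputable def gosperSum (q x : ℂ) (n : ℕ) : ℂ :=
  ∑ k ∈ range (n + 1), gosperCoeff q (q ^ (3 * n))⁻¹ k * (qpoch x q k * qpoch (q / x) q k)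

theorem gosperCoeff_zero (q N : ℂ) : gosperCoeff q N 0 = 1 := by
  simp [gosperCoeff, qpoch_zero]

theorem gosperCoeff_succ {q N : ℂ} {k : ℕ} (hqk : qpoch q q (2 * (k + 1)) ≠ 0)
    (hN : N * q ^ k = 1 → N * (q ^ 3) ^ k = 1) :
    gosperCoeff q N (k + 1) *
        ((1 - N * q ^ k) * ((1 - q * q ^ (2 * k)) * (1 - q * q ^ (2 * k + 1)))) =
      q * (1 - N * (q ^ 3) ^ k) * gosperCoeff q N k := by
  rw [mul_add_one, qpoch_succ, qpoch_succ, mul_assoc, mul_ne_zero_iff, mul_ne_zero_iff] at hqk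
  obtain ⟨hq₀, hq₁, hq₂⟩ := hqk
  rw [gosperCoeff, gosperCoeff, mul_add_one, qpoch_succ, qpoch_succ, qpoch_succ, qpoch_succ q]
  rcases eq_or_ne (N * q ^ k) 1 with h | h
  · rw [h, hN h]
    ring
  · have h' : 1 - N * q ^ k ≠ 0 := sub_ne_zero.mpr h.symm
    generalize 1 - N * q ^ k = u, 1 - q * q ^ (2 * k) = v, 1 - q * q ^ (2 * k + 1) = w,
      qpoch q q (2 * k) = D at *
    field

theorem gosperCoeff_div_succ {q N : ℂ} {k : ℕ} (hq : q ≠ 0) (hqk : qpoch q q (2 * (k + 1)) ≠ 0)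
    (hN : qpoch (N / q ^ 3) q (k + 3) ≠ 0) :
    gosperCoeff q (N / q ^ 3) (k + 1) * ((1 - N / q) * (1 - N / q ^ 2) *
        ((1 - q * q ^ (2 * k)) * (1 - q * q ^ (2 * k + 1)))) =
      q * ((1 - N * q ^ k / q) * (1 - N * q ^ k / q ^ 2)) * gosperCoeff q N k := by
  have mul_q : N / q ^ 3 * q = N / q ^ 2 := by field
  have mul_q' : N / q ^ 2 * q = N / q := by field
  have top : N / q ^ 3 * q ^ (k + 1) = N * q ^ k / q ^ 2 := by field
  have top' : N / q ^ 3 * q ^ (k + 2) = N * q ^ k / q := by field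
  have split : qpoch (N / q ^ 3) q (k + 3) =
      (1 - N / q ^ 3) * ((1 - N / q ^ 2) * ((1 - N / q) * qpoch N q k)) := by
    rw [qpoch_succ', qpoch_succ', qpoch_succ', mul_q, mul_q', div_mul_cancel₀ _ hq]
  have shift : qpoch (N / q ^ 3) q (k + 1) * (1 - N * q ^ k / q ^ 2) * (1 - N * q ^ k / q) =
      (1 - N / q ^ 3) * ((1 - N / q ^ 2) * ((1 - N / q) * qpoch N q k)) := by
    rw [← split, qpoch_succ _ _ (k + 2), qpoch_succ _ _ (k + 1), top, top']
  have hN' : qpoch (N / q ^ 3) q (k + 1) ≠ 0 := qpoch_ne_zero_of_le (by lia) hN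
  have base : qpoch (N / q ^ 3) (q ^ 3) (k + 1) = (1 - N / q ^ 3) * qpoch N (q ^ 3) k := by
    rw [qpoch_succ', div_mul_cancel₀ _ (pow_ne_zero 3 hq)]
  obtain ⟨-, hN₂, hN₁, hN₀⟩ : 1 - N / q ^ 3 ≠ 0 ∧ 1 - N / q ^ 2 ≠ 0 ∧ 1 - N / q ≠ 0 ∧
      qpoch N q k ≠ 0 := by
    simpa only [split, mul_ne_zero_iff] using hN
  rw [mul_add_one, qpoch_succ, qpoch_succ, mul_assoc, mul_ne_zero_iff, mul_ne_zero_iff] at hqk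
  obtain ⟨hq₀, hq₁, hq₂⟩ := hqk
  rw [gosperCoeff, gosperCoeff, base, mul_add_one, qpoch_succ q, qpoch_succ q]
  generalize qpoch (N / q ^ 3) q (k + 1) = A, qpoch N q k = B, 1 - N / q = u, 1 - N / q ^ 2 = u',
    1 - q * q ^ (2 * k) = v, 1 - q * q ^ (2 * k + 1) = w, qpoch q q (2 * k) = D,
    1 - N * q ^ k / q = r, 1 - N * q ^ k / q ^ 2 = r', 1 - N / q ^ 3 = t at *
  field_simp
  linear_combination -(qpoch N (q ^ 3) k * q * q ^ k) * shift

theorem gosperCoeff_pascal {q N : ℂ} {k : ℕ} (hq : q ≠ 0) (hN₀ : N ≠ 0)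
    (hqk : qpoch q q (2 * (k + 1)) ≠ 0) (hN : qpoch (N / q ^ 3) q (k + 3) ≠ 0)
    (hN₁ : N * q ^ k = 1 → N * (q ^ 3) ^ k = 1) :
    (1 - q / N) * (1 - q ^ 2 / N) * gosperCoeff q (N / q ^ 3) (k + 1) =
      (1 - q / N / q ^ (k + 1)) * (1 - q * (q / N) * q ^ (k + 1)) * gosperCoeff q N (k + 1) +
        q / N / q ^ k * gosperCoeff q N k := by
  have raise := gosperCoeff_succ hqk hN₁
  have lower := gosperCoeff_div_succ hq hqk hN
  rw [mul_add_one, qpoch_succ, qpoch_succ, mul_assoc] at hqk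
  refine mul_right_cancel₀ (right_ne_zero_of_mul hqk) ?_
  have hqk' : q ^ k ≠ 0 := pow_ne_zero k hq
  have factor_lower : (1 - q / N) * (1 - q ^ 2 / N) =
      q ^ 3 / N ^ 2 * ((1 - N / q) * (1 - N / q ^ 2)) := by field
  have factor_raise : 1 - q / N / q ^ (k + 1) = -(1 / (N * q ^ k)) * (1 - N * q ^ k) := by field
  have polynomial_identity :
      q ^ 3 / N ^ 2 * (q * ((1 - N * q ^ k / q) * (1 - N * q ^ k / q ^ 2))) =
        -(1 / (N * q ^ k)) * (1 - q * (q / N) * q ^ (k + 1)) * (q * (1 - N * (q ^ 3) ^ k)) +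
          q / N / q ^ k * ((1 - q * q ^ (2 * k)) * (1 - q * q ^ (2 * k + 1))) := by
    field
  rw [factor_lower, factor_raise]
  linear_combination q ^ 3 / N ^ 2 * lower +
    1 / (N * q ^ k) * (1 - q * (q / N) * q ^ (k + 1)) * raise +
      gosperCoeff q N k * polynomial_identity

theorem mul_qpoch_mul_qpoch_eq_add {q x : ℂ} (hq : q ≠ 0) (hx : x ≠ 0) (y : ℂ) (k : ℕ) :
    (1 - y * x) * (1 - q * y / x) * (qpoch x q k * qpoch (q / x) q k) =
      (1 - y / q ^ k) * (1 - q * y * q ^ k) * (qpoch x q k * qpoch (q / x) q k) +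
        y / q ^ k * (qpoch x q (k + 1) * qpoch (q / x) q (k + 1)) := by
  have factor : (1 - y * x) * (1 - q * y / x) = (1 - y / q ^ k) * (1 - q * y * q ^ k) +
      y / q ^ k * ((1 - x * q ^ k) * (1 - q / x * q ^ k)) := by
    field
  rw [factor, qpoch_succ, qpoch_succ]
  ring

theorem gosperCoeff_inv_pow_pascal {q : ℂ} {k n : ℕ} (hq : q ≠ 0) (hkn : k ≤ n)
    (hqn : qpoch q q (3 * (n + 1)) ≠ 0) :
    (1 - q * (q ^ 3) ^ n) * (1 - q ^ 2 * (q ^ 3) ^ n) *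
        gosperCoeff q (q ^ (3 * (n + 1)))⁻¹ (k + 1) =
      (1 - q * (q ^ 3) ^ n / q ^ (k + 1)) * (1 - q * (q * (q ^ 3) ^ n) * q ^ (k + 1)) *
          gosperCoeff q (q ^ (3 * n))⁻¹ (k + 1) +
        q * (q ^ 3) ^ n / q ^ k * gosperCoeff q (q ^ (3 * n))⁻¹ k := by
  have shift : (q ^ (3 * (n + 1)))⁻¹ = (q ^ (3 * n))⁻¹ / q ^ 3 := by field
  have hN₁ : (q ^ (3 * n))⁻¹ * q ^ k = 1 → (q ^ (3 * n))⁻¹ * (q ^ 3) ^ k = 1 := by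
    intro h
    obtain rfl | hn := n.eq_zero_or_pos
    · simp [Nat.le_zero.mp hkn]
    · refine absurd h (qpoch_ne_zero_iff.mp ?_ k k.lt_succ_self)
      exact qpoch_inv_pow_ne_zero hq (by lia) (qpoch_ne_zero_of_le (by lia) hqn)
  have pascal := gosperCoeff_pascal hq (inv_ne_zero (pow_ne_zero (3 * n) hq))
    (qpoch_ne_zero_of_le (by lia) hqn) (shift ▸ qpoch_inv_pow_ne_zero hq (by lia) hqn) hN₁
  rw [div_inv_eq_mul, div_inv_eq_mul, ← shift] at pascal
  rwa [← pow_mul]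

theorem gosperSum_succ {q x : ℂ} {n : ℕ} (hq : q ≠ 0) (hx : x ≠ 0)
    (hqn : qpoch q q (3 * (n + 1)) ≠ 0) :
    (1 - q * (q ^ 3) ^ n) * (1 - q ^ 2 * (q ^ 3) ^ n) * gosperSum q x (n + 1) =
      (1 - q * (q ^ 3) ^ n * x) * (1 - q * (q * (q ^ 3) ^ n) / x) * gosperSum q x n := by
  set P : ℕ → ℂ := fun k => qpoch x q k * qpoch (q / x) q k
  set y := q * (q ^ 3) ^ n with hy
  set c : ℕ → ℂ := gosperCoeff q (q ^ (3 * n))⁻¹ with hc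
  set w : ℕ → ℂ := fun k => (1 - y / q ^ k) * (1 - q * y * q ^ k)
  have expand (k : ℕ) : (1 - y * x) * (1 - q * y / x) * (c k * P k) =
      w k * (c k * P k) + y / q ^ k * c k * P (k + 1) := by
    linear_combination c k * mul_qpoch_mul_qpoch_eq_add hq hx y k
  have pascal : ∀ k ∈ range (n + 1), (1 - y) * (1 - q ^ 2 * (q ^ 3) ^ n) *
      (gosperCoeff q (q ^ (3 * (n + 1)))⁻¹ (k + 1) * P (k + 1)) =
        w (k + 1) * (c (k + 1) * P (k + 1)) + y / q ^ k * c k * P (k + 1) := by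
    intro k hk
    linear_combination P (k + 1) *
      gosperCoeff_inv_pow_pascal hq (mem_range_succ_iff.mp hk) hqn
  have c_top : c (n + 1) = 0 := by
    rw [hc, gosperCoeff, qpoch_eq_zero n.lt_succ_self, zero_div, zero_mul]
    rw [pow_mul, inv_mul_cancel₀ (pow_ne_zero n (pow_ne_zero 3 hq))]
  have shift_index : ∑ k ∈ range (n + 1), w k * (c k * P k) =
      ∑ k ∈ range (n + 1), w (k + 1) * (c (k + 1) * P (k + 1)) + w 0 * (c 0 * P 0) := by
    rw [← sum_range_succ' (fun k => w k * (c k * P k)), sum_range_succ _ (n + 1), c_top]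
    ring
  have w_zero : w 0 = (1 - y) * (1 - q ^ 2 * (q ^ 3) ^ n) := by
    simp only [w, hy]
    ring
  rw [gosperSum, gosperSum, mul_sum, mul_sum, sum_congr rfl fun k _ => expand k,
    sum_add_distrib, sum_range_succ', sum_congr rfl pascal, sum_add_distrib, shift_index, w_zero,
    hc, gosperCoeff_zero, gosperCoeff_zero]
  ring

theorem gosperSum_eq {q x : ℂ} {n : ℕ} (hq : q ≠ 0) (hx : x ≠ 0) (hqn : qpoch q q (3 * n) ≠ 0) :
    gosperSum q x n = qpoch (q * x) (q ^ 3) n * qpoch (q ^ 2 / x) (q ^ 3) n /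
      (qpoch q (q ^ 3) n * qpoch (q ^ 2) (q ^ 3) n) := by
  induction n with
  | zero => simp [gosperSum, gosperCoeff_zero, qpoch_zero]
  | succ n ih =>
    have h₁ : 1 - q * (q ^ 3) ^ n ≠ 0 := by
      rw [← pow_mul]
      exact sub_ne_zero.mpr (qpoch_ne_zero_iff.mp hqn (3 * n) (by lia)).symm
    have h₂ : 1 - q ^ 2 * (q ^ 3) ^ n ≠ 0 := by
      rw [← pow_mul, pow_two, mul_assoc, ← pow_succ']
      exact sub_ne_zero.mpr (qpoch_ne_zero_iff.mp hqn (3 * n + 1) (by lia)).symm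
    have step := gosperSum_succ hq hx hqn
    rw [ih (qpoch_ne_zero_of_le (by lia) hqn), mul_comm, ← eq_div_iff (mul_ne_zero h₁ h₂)] at step
    rw [step, qpoch_succ, qpoch_succ, qpoch_succ, qpoch_succ]
    simp only [div_eq_mul_inv, mul_inv]
    ring

theorem qpoch_self_two_mul {q s : ℂ} (hs : s ^ 2 = q) (k : ℕ) :
    qpoch q q (2 * k) = qpoch q q k * qpoch (-q) q k * qpoch s q k * qpoch (-s) q k := by
  rw [qpoch_two_mul, mul_assoc _ (qpoch s q k), qpoch_mul_qpoch_neg, qpoch_mul_qpoch_neg, hs,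
    ← pow_two, mul_comm]

/-- The left-hand side of the extended q-Gosper identity, with `s` standing for `q^{1/2}`. -/
noncomputable def extendedGosperSum (q x s : ℂ) (ℓ n : ℕ) : ℂ :=
  ∑ k ∈ range (n + 1),
    qpoch (q ^ (-(3 * n : ℤ))) (q ^ 3) k * (qpoch x q k * qpoch (q ^ (1 - ℓ : ℤ) / x) q k) /
      (qpoch q q k * qpoch (-(q ^ (1 - ℓ : ℤ))) q k * qpoch s q k * qpoch (-s) q k *
        qpoch (q ^ (-(3 * n : ℤ))) q k) * q ^ k

/-- The right-hand side of the extended q-Gosper identity. -/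
noncomputable def extendedGosperExpansion (q x : ℂ) (ℓ n : ℕ) : ℂ :=
  qpoch x q ℓ * qpoch (-x) q ℓ / (qpoch (x ^ 2) q ℓ * qpoch (-1) q ℓ) *
    ∑ i ∈ range (ℓ + 1), gosperExpansionCoeff q x ℓ i *
      (qpoch (q ^ (1 + i) * x) (q ^ 3) n * qpoch (q ^ (2 - i : ℤ) / x) (q ^ 3) n /
        (qpoch q (q ^ 3) n * qpoch (q ^ 2) (q ^ 3) n))

theorem sum_gosperExpansionCoeff_mul_gosperSum {q x : ℂ} {ℓ n : ℕ} (hq : q ≠ 0) (hx : x ≠ 0)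
    (hqℓ : qpoch q q ℓ ≠ 0) (hxℓ : qpoch (x ^ 2 / q) q (2 * ℓ + 1) ≠ 0)
    (hxk : ∀ k ≤ n, qpoch (x / q ^ k) q ℓ ≠ 0)
    (hqk : ∀ k ≤ n, qpoch (-(q ^ (1 - ℓ : ℤ))) q k ≠ 0) :
    ∑ i ∈ range (ℓ + 1), gosperExpansionCoeff q x ℓ i * gosperSum q (x * q ^ i) n =
      qpoch (x ^ 2) q ℓ * qpoch (-1) q ℓ / (qpoch x q ℓ * qpoch (-x) q ℓ) *
        ∑ k ∈ range (n + 1), gosperCoeff q (q ^ (3 * n))⁻¹ k *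
          (qpoch x q k * qpoch (q ^ (1 - ℓ : ℤ) / x) q k * qpoch (-q) q k /
            qpoch (-(q ^ (1 - ℓ : ℤ))) q k) := by
  simp only [gosperSum, mul_sum]
  rw [sum_comm]
  refine sum_congr rfl fun k hk => ?_
  have hkn : k ≤ n := mem_range_succ_iff.mp hk
  rw [mul_left_comm, ← sum_gosperExpansionCoeff_mul hq hx hqℓ hxℓ (hxk k hkn) (hqk k hkn), mul_sum]
  refine sum_congr rfl fun i _ => ?_
  rw [← div_div q, div_right_comm q x, mul_left_comm]

theorem extendedGosperSum_eq_sum_gosperCoeff {q s : ℂ} {n : ℕ} (x : ℂ) (ℓ : ℕ) (hs : s ^ 2 = q)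
    (hqn : qpoch q q (2 * n) ≠ 0) :
    extendedGosperSum q x s ℓ n = ∑ k ∈ range (n + 1), gosperCoeff q (q ^ (3 * n))⁻¹ k *
      (qpoch x q k * qpoch (q ^ (1 - ℓ : ℤ) / x) q k * qpoch (-q) q k /
        qpoch (-(q ^ (1 - ℓ : ℤ))) q k) := by
  have hN : q ^ (-(3 * n : ℤ)) = (q ^ (3 * n))⁻¹ := by
    rw [zpow_neg]
    norm_cast
  rw [extendedGosperSum, hN]
  refine sum_congr rfl fun k hk => ?_
  have hqk : qpoch q q (2 * k) ≠ 0 := by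
    have hkn : k ≤ n := mem_range_succ_iff.mp hk
    exact qpoch_ne_zero_of_le (by lia) hqn
  rw [qpoch_self_two_mul hs] at hqk
  have hneg : qpoch (-q) q k ≠ 0 :=
    right_ne_zero_of_mul (left_ne_zero_of_mul (left_ne_zero_of_mul hqk))
  rw [gosperCoeff, qpoch_self_two_mul hs]
  generalize qpoch (-q) q k = T at *
  field

theorem gosperSum_mul_pow {q x : ℂ} {n : ℕ} (hq : q ≠ 0) (hx : x ≠ 0) (hqn : qpoch q q (3 * n) ≠ 0)
    (i : ℕ) :
    gosperSum q (x * q ^ i) n =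
      qpoch (q ^ (1 + i) * x) (q ^ 3) n * qpoch (q ^ (2 - i : ℤ) / x) (q ^ 3) n /
        (qpoch q (q ^ 3) n * qpoch (q ^ 2) (q ^ 3) n) := by
  have h₁ : q * (x * q ^ i) = q ^ (1 + i) * x := by ring
  have h₂ : q ^ 2 / (x * q ^ i) = q ^ (2 - i : ℤ) / x := by
    rw [zpow_sub₀ hq, zpow_natCast, div_div, mul_comm x]
    norm_cast
  rw [gosperSum_eq hq (mul_ne_zero hx (pow_ne_zero i hq)) hqn, h₁, h₂]

theorem extendedGosperSum_eq {q x s : ℂ} {ℓ n : ℕ} (hs : s ^ 2 = q) (hq : q ≠ 0) (hx : x ≠ 0)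
    (hqn : qpoch q q (3 * n) ≠ 0) (hqℓ : qpoch q q ℓ ≠ 0)
    (hxℓ : qpoch (x ^ 2 / q) q (2 * ℓ + 1) ≠ 0) (h1ℓ : qpoch (-1) q ℓ ≠ 0)
    (hxk : ∀ k ≤ n, qpoch (x / q ^ k) q ℓ ≠ 0)
    (hqk : ∀ k ≤ n, qpoch (-(q ^ (1 - ℓ : ℤ))) q k ≠ 0) :
    extendedGosperSum q x s ℓ n = extendedGosperExpansion q x ℓ n := by
  have hx2 : qpoch (x ^ 2) q (2 * ℓ) ≠ 0 := by
    rw [qpoch_succ', div_mul_cancel₀ _ hq] at hxℓ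
    exact right_ne_zero_of_mul hxℓ
  obtain ⟨hx₁, hx₂⟩ := qpoch_ne_zero_of_sq hx2
  have hxx : qpoch x q ℓ * qpoch (-x) q ℓ ≠ 0 := mul_ne_zero hx₁ hx₂
  have hx2ℓ : qpoch (x ^ 2) q ℓ * qpoch (-1) q ℓ ≠ 0 :=
    mul_ne_zero (qpoch_ne_zero_of_le (by lia) hx2) h1ℓ
  rw [extendedGosperSum_eq_sum_gosperCoeff x ℓ hs (qpoch_ne_zero_of_le (by lia) hqn),
    extendedGosperExpansion]
  simp only [← gosperSum_mul_pow hq hx hqn]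
  rw [sum_gosperExpansionCoeff_mul_gosperSum hq hx hqℓ hxℓ hxk hqk, ← mul_assoc,
    div_mul_div_cancel₀ hx2ℓ, div_self hxx, one_mul]

theorem extendedGosperSum_eq_of_generic {q x s : ℂ} {ℓ : ℕ} (n : ℕ) (hs : s ^ 2 = q) (hq : q ≠ 0)
    (hx : x ≠ 0) (hq1 : ∀ m : ℤ, q ^ m = 1 → m = 0) (hqx : ∀ m : ℤ, q ^ m = x ^ 2 → m = 0)
    (hxℓ : qpoch (x ^ 2) q ℓ ≠ 0) (h1ℓ : qpoch (-1) q ℓ ≠ 0) :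
    extendedGosperSum q x s ℓ n = extendedGosperExpansion q x ℓ n := by
  have hself (k : ℕ) : qpoch q q k ≠ 0 := qpoch_ne_zero_iff.mpr fun j _ h => by
    have := hq1 (j + 1) (by rw [← h, zpow_add_one₀ hq, zpow_natCast, mul_comm])
    lia
  have hx1 (hℓ : ℓ ≠ 0) : x ^ 2 ≠ 1 := by
    simpa using qpoch_ne_zero_iff.mp hxℓ 0 (by lia)
  refine extendedGosperSum_eq hs hq hx (hself _) (hself _) (qpoch_ne_zero_iff.mpr fun j hj h => ?_)
    h1ℓ (fun k _ => qpoch_ne_zero_iff.mpr fun j hj h => ?_)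
    fun k _ => qpoch_ne_zero_iff.mpr fun j _ h => ?_
  · have hj1 := hqx (1 - j) (by rw [zpow_one_sub_natCast₀ hq]; field_simp at h ⊢; exact h.symm)
    obtain rfl : j = 1 := by lia
    refine hx1 (by lia) ?_
    rwa [pow_one, div_mul_cancel₀ _ hq] at h
  · have hxpow : x = q ^ (k - j : ℤ) := by
      rw [zpow_sub₀ hq, zpow_natCast, zpow_natCast]
      field_simp at h ⊢
      exact h
    have hkj := hqx ((k - j : ℤ) * 2) (by rw [zpow_mul, ← hxpow]; norm_cast)
    refine hx1 (by lia) ?_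
    rw [hxpow, show (k - j : ℤ) = 0 by lia, zpow_zero, one_pow]
  · rw [neg_mul, ← zpow_natCast, ← zpow_add₀ hq] at h
    have hm := hq1 ((1 - ℓ + j : ℤ) * 2) (by rw [zpow_mul, neg_eq_iff_eq_neg.mp h]; norm_num)
    rw [show (1 - ℓ + j : ℤ) = 0 by lia, zpow_zero] at h
    norm_num at h

theorem dense_setOf_zpow_notMem {𝕜 : Type*} [NontriviallyNormedField 𝕜] [CompleteSpace 𝕜]
    {S : Set 𝕜} (hS : S.Countable) : Dense {t : 𝕜 | ∀ m : ℤ, m ≠ 0 → t ^ m ∉ S} := by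
  have finite_pow (m : ℕ) (hm : 0 < m) (c : 𝕜) : {t : 𝕜 | t ^ m = c}.Finite := by
    simpa only [Polynomial.mem_nthRoots hm] using Multiset.finite_toSet (Polynomial.nthRoots m c)
  have finite_zpow (m : ℤ) (hm : m ≠ 0) (c : 𝕜) : {t : 𝕜 | t ^ m = c}.Finite := by
    rcases Int.natAbs_eq m with h | h
    · rw [h]
      simpa only [zpow_natCast] using finite_pow m.natAbs (by lia) c
    · rw [h]
      simpa only [zpow_neg, zpow_natCast, inv_eq_iff_eq_inv] using finite_pow m.natAbs (by lia) c⁻¹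
  have countable_union : (⋃ m ∈ {m : ℤ | m ≠ 0}, ⋃ c ∈ S, {t : 𝕜 | t ^ m = c}).Countable :=
    (Set.to_countable _).biUnion fun m hm =>
      hS.biUnion fun c _ => (finite_zpow m hm c).countable
  refine (countable_union.dense_compl 𝕜).mono fun t ht m hm htS => ?_
  exact ht (Set.mem_biUnion hm (Set.mem_biUnion htS rfl))

@[fun_prop]
theorem continuousAt_qpoch {X : Type*} [TopologicalSpace X] {a q : X → ℂ} {y : X} (k : ℕ)
    (ha : ContinuousAt a y) (hq : ContinuousAt q y) :
    ContinuousAt (fun t => qpoch (a t) (q t) k) y := by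
  unfold qpoch
  fun_prop

theorem continuousAt_extendedGosperSum {q s : ℂ} {ℓ n : ℕ} (x : ℂ) (hq : q ≠ 0)
    (hden : ∀ k ≤ n, qpoch q q k * qpoch (-(q ^ (1 - ℓ : ℤ))) q k * qpoch s q k * qpoch (-s) q k *
      qpoch (q ^ (-(3 * n : ℤ))) q k ≠ 0) :
    ContinuousAt (fun p : ℂ × ℂ => extendedGosperSum p.1 x p.2 ℓ n) (q, s) := by
  unfold extendedGosperSum
  refine tendsto_finsetSum _ fun k hk => ContinuousAt.mul (ContinuousAt.div₀ ?_ ?_ ?_) ?_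
  case refine_3 => exact hden k (mem_range_succ_iff.mp hk)
  all_goals fun_prop (disch := exact Or.inl hq)

theorem continuousAt_gosperExpansionCoeff {q x : ℂ} {ℓ i : ℕ} (hq : q ≠ 0)
    (hden : qpoch q q i * qpoch (x ^ 2 * q ^ ℓ) q i ≠ 0) (hxq : 1 - x ^ 2 / q ≠ 0) :
    ContinuousAt (fun q => gosperExpansionCoeff q x ℓ i) q := by
  unfold gosperExpansionCoeff
  fun_prop (disch := first | assumption | exact Or.inl hq)

theorem continuousAt_extendedGosperExpansion {q x : ℂ} {ℓ n : ℕ} (hq : q ≠ 0)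
    (hdenℓ : qpoch (x ^ 2) q ℓ * qpoch (-1) q ℓ ≠ 0)
    (hdeni : ∀ i ≤ ℓ, qpoch q q i * qpoch (x ^ 2 * q ^ ℓ) q i ≠ 0) (hxq : 1 - x ^ 2 / q ≠ 0)
    (hdenn : qpoch q (q ^ 3) n * qpoch (q ^ 2) (q ^ 3) n ≠ 0) :
    ContinuousAt (fun q => extendedGosperExpansion q x ℓ n) q := by
  unfold extendedGosperExpansion
  refine ContinuousAt.mul (by fun_prop (disch := assumption)) (tendsto_finsetSum _ fun i hi => ?_)
  refine (continuousAt_gosperExpansionCoeff hq (hdeni i (mem_range_succ_iff.mp hi)) hxq).mul ?_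
  fun_prop (disch := first | assumption | exact Or.inl hq)

theorem frequently_extendedGosperSum_eq {x s : ℂ} {ℓ : ℕ} (n : ℕ) (hs : s ^ 2 ≠ 0) (hx : x ≠ 0)
    (hdenℓ : qpoch (x ^ 2) (s ^ 2) ℓ * qpoch (-1) (s ^ 2) ℓ ≠ 0) :
    ∃ᶠ t in 𝓝 s, extendedGosperSum (t ^ 2) x t ℓ n = extendedGosperExpansion (t ^ 2) x ℓ n := by
  have generic : ∃ᶠ t in 𝓝 s, ∀ m : ℤ, m ≠ 0 → t ^ m ∉ ({1, x ^ 2} : Set ℂ) :=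
    mem_closure_iff_frequently.mp (dense_setOf_zpow_notMem (Set.to_countable _) s)
  have sq_ne_zero : ∀ᶠ t in 𝓝 s, t ^ 2 ≠ 0 := ContinuousAt.eventually_ne (by fun_prop) hs
  have denom_ne_zero : ∀ᶠ t in 𝓝 s, qpoch (x ^ 2) (t ^ 2) ℓ * qpoch (-1) (t ^ 2) ℓ ≠ 0 :=
    ContinuousAt.eventually_ne (by fun_prop) hdenℓ
  refine (generic.and_eventually (sq_ne_zero.and denom_ne_zero)).mono ?_
  rintro t ⟨ht, ht₀, htℓ⟩
  have ht_sq (m : ℤ) (h : (t ^ 2) ^ m ∈ ({1, x ^ 2} : Set ℂ)) : m = 0 := by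
    by_contra hm
    refine ht (2 * m) (by lia) ?_
    rwa [zpow_mul, zpow_ofNat]
  exact extendedGosperSum_eq_of_generic n rfl ht₀ hx (fun m h => ht_sq m (.inl h))
    (fun m h => ht_sq m (.inr h)) (left_ne_zero_of_mul htℓ) (right_ne_zero_of_mul htℓ)

theorem q_gosper_first_extension (ℓ n : ℕ) (q x s : ℂ) (hs : s ^ 2 = q)
    (hq : q ≠ 0) (hx : x ≠ 0)
    (hden : ∀ k ≤ n,
      qpoch q q k * qpoch (-(q ^ (1 - ℓ : ℤ))) q k * qpoch s q k * qpoch (-s) q k *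
        qpoch (q ^ (-(3*n : ℤ))) q k ≠ 0)
    (hdenℓ : qpoch (x^2) q ℓ * qpoch (-1) q ℓ ≠ 0)
    (hdeni : ∀ i ≤ ℓ, qpoch q q i * qpoch (x^2 * q^ℓ) q i ≠ 0)
    (hx2 : 1 - x^2 / q ≠ 0)
    (hden2 : qpoch q (q^3) n * qpoch (q^2) (q^3) n ≠ 0) :
    ∑ k ∈ Finset.range (n+1),
      qpoch (q ^ (-(3*n : ℤ))) (q^3) k *
        (qpoch x q k * qpoch (q ^ (1 - ℓ : ℤ) / x) q k) /
        (qpoch q q k * qpoch (-(q ^ (1 - ℓ : ℤ))) q k * qpoch s q k * qpoch (-s) q k *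
          qpoch (q ^ (-(3*n : ℤ))) q k) * q^k
      = (qpoch x q ℓ * qpoch (-x) q ℓ) / (qpoch (x^2) q ℓ * qpoch (-1) q ℓ) *
        ∑ i ∈ Finset.range (ℓ+1),
          (-1 : ℂ)^i * q^(ℓ*i) * ((1 - x^2 * q ^ (2*(i : ℤ) - 1)) / (1 - x^2 / q)) *
            (qpoch (q ^ (-(ℓ : ℤ))) q i * qpoch (x^2 / q) q i) /
            (qpoch q q i * qpoch (x^2 * q^ℓ) q i) *
            ((qpoch (q^(1+i)*x) (q^3) n * qpoch (q ^ (2 - i : ℤ) / x) (q^3) n) /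
              (qpoch q (q^3) n * qpoch (q^2) (q^3) n)) := by
  change extendedGosperSum q x s ℓ n = extendedGosperExpansion q x ℓ n
  subst hs
  have hsum : ContinuousAt (fun t => extendedGosperSum (t ^ 2) x t ℓ n) s :=
    ContinuousAt.comp (f := fun t : ℂ => (t ^ 2, t))
      (continuousAt_extendedGosperSum x hq hden) (by fun_prop)
  have hexpansion : ContinuousAt (fun t => extendedGosperExpansion (t ^ 2) x ℓ n) s :=
    ContinuousAt.comp (f := fun t : ℂ => t ^ 2)
      (continuousAt_extendedGosperExpansion hq hdenℓ hdeni hx2 hden2) (by fun_prop)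
  exact tendsto_nhds_unique_of_frequently_eq hsum hexpansion
    (frequently_extendedGosperSum_eq n hq hx hdenℓ)
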